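/- Let $m \ge 1$. Define the semiseparable matrix $M^{-1}$ with entries $[M^{-1}]_{\ell,n} = \frac{\sqrt{(2\ell+2m+1)(2n+2m+1)}}{2m}\sqrt{\frac{(\ell+2m)!}{\ell!}\cdot\frac{n!}{(n+2m)!}}$ for $\ell \le n$ with $\ell+n$ even, $[M^{-1}]_{\ell,n} = \frac{\sqrt{(2\ell+2m+1)(2n+2m+1)}}{2m}\sqrt{\frac{\ell!}{(\ell+2m)!}\cdot\frac{(n+2m)!}{n!}}$ for $\ell > n$ with $\ell+n$ even, and $0$ when $\ell+n$ is odd. Then $[M^{-1}]_{\ell,n} = \int_{-1}^{1} \frac{\tilde P_{\ell+m}^m(x)\,\tilde P_{n+m}^m(x)}{1-x^2}\,dx$ for all $\ell, n \ge 0$. -/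

import Mathlib

open scoped Nat

/-- Associated Legendre function (Condon–Shortley phase) via Rodrigues' formula. -/
noncomputable def assocLegendre (ℓ m : ℕ) (x : ℝ) : ℝ :=
  (-1 : ℝ) ^ m * (1 - x ^ 2) ^ ((m : ℝ) / 2) *
    iteratedDeriv m
      (fun y : ℝ => (1 / (2 ^ ℓ * (ℓ ! : ℝ))) *
        iteratedDeriv ℓ (fun t : ℝ => (t ^ 2 - 1) ^ ℓ) y) x

/-- Normalized associated Legendre function, orthonormal in `L²([-1,1],dx)`. -/
noncomputable def tildeP (ℓ m : ℕ) (x : ℝ) : ℝ :=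
  (-1 : ℝ) ^ m * Real.sqrt (((ℓ : ℝ) + 1 / 2) * ((ℓ - m)! : ℝ) / ((ℓ + m)! : ℝ)) *
    assocLegendre ℓ m x

/-- The semiseparable entries of the inverse multiplication operator `M⁻¹`. -/
noncomputable def Minv (m ℓ n : ℕ) : ℝ :=
  if Even (ℓ + n) then
    if ℓ ≤ n then
      Real.sqrt ((2 * (ℓ : ℝ) + 2 * m + 1) * (2 * (n : ℝ) + 2 * m + 1)) / (2 * m) *
        Real.sqrt ((((ℓ + 2 * m)! : ℝ) / (ℓ ! : ℝ)) * ((n ! : ℝ) / ((n + 2 * m)! : ℝ)))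
    else
      Real.sqrt ((2 * (ℓ : ℝ) + 2 * m + 1) * (2 * (n : ℝ) + 2 * m + 1)) / (2 * m) *
        Real.sqrt (((ℓ ! : ℝ) / ((ℓ + 2 * m)! : ℝ)) * (((n + 2 * m)! : ℝ) / (n ! : ℝ)))
  else 0

/-!
Up to normalization the integrand is `(1 - x²)^(m-1) P_k^{(m)} P_N^{(m)}` with `k = ℓ + m`,
`N = n + m`, where we may assume `ℓ ≤ n`. Only `m - 1` powers of `1 - x²` survive the division, so
when the `m` derivatives are moved off `P_N` by parts, the first `m - 1` boundary terms vanish and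
the `m`-th does not. The remaining integral pairs `P_N` with a polynomial of degree less than `N`,
hence is zero, and the entry is the boundary term. Its values at `1` and `-1` differ by the sign
`-(-1)^(ℓ+n)`, which produces the parity condition.
-/

section LegendrePolynomials

open Polynomial

section EndpointValues

variable {R : Type*} [CommSemiring R] {q : R[X]} {a : R}

theorem eval_iterate_derivative_eq_factorial_mul_taylor_coeff (p : R[X]) (k : ℕ) (a : R) :
    (derivative^[k] p).eval a = k ! * (taylor a p).coeff k := by
  rw [taylor_coeff, ← factorial_smul_hasseDeriv]
  simp

theorem eval_iterate_derivative_pow_mul_of_lt (hq : q.eval a = 0) (g : R[X]) {k r : ℕ}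
    (hkr : k < r) :
    (derivative^[k] (q ^ r * g)).eval a = 0 := by
  have hdvd : q ∣ derivative^[k] (q ^ r * g) :=
    (dvd_pow_self q (Nat.sub_ne_zero_of_lt hkr)).trans
      (pow_sub_dvd_iterate_derivative_of_pow_dvd k (dvd_mul_right _ _))
  exact eval_eq_zero_of_dvd_of_eval_eq_zero hdvd hq

theorem eval_iterate_derivative_pow_mul (hq : q.eval a = 0) (r : ℕ) (g : R[X]) :
    (derivative^[r] (q ^ r * g)).eval a = r ! * (derivative q).eval a ^ r * g.eval a := by
  induction r generalizing g with
  | zero => simp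
  | succ r ih =>
    have hderiv : derivative (q ^ (r + 1) * g) =
        q ^ r * ((r + 1 : ℕ) * derivative q * g + q * derivative g) := by
      rw [derivative_mul, derivative_pow_succ]
      push_cast
      simp only [map_add, map_natCast, map_one]
      ring
    rw [Function.iterate_succ_apply, hderiv, ih, Nat.factorial_succ]
    simp only [eval_add, eval_mul, eval_natCast, hq]
    push_cast
    ring

end EndpointValues

theorem eval_iterate_derivative_X_sq_sub_one_pow {R : Type*} [CommRing R] {a : R}
    (ha : a ^ 2 = 1) (n m : ℕ) :
    (derivative^[n + m] ((X ^ 2 - 1 : R[X]) ^ n)).eval a =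
      (n + m)! * (n.choose m * (2 * a) ^ (n - m)) := by
  have htaylor : taylor a (X ^ 2 - 1 : R[X]) = X * (X + C (2 * a)) := by
    have hC : (C a : R[X]) ^ 2 = 1 := by rw [← C_pow, ha, C_1]
    simp only [map_sub, taylor_pow, taylor_X, taylor_one, map_mul, map_ofNat, map_one]
    linear_combination hC
  rw [eval_iterate_derivative_eq_factorial_mul_taylor_coeff, taylor_pow, htaylor, mul_pow,
    add_comm n m, coeff_X_pow_mul, coeff_X_add_C_pow, mul_comm (_ ^ _)]

theorem integral_eval_mul_derivative (f g : ℝ[X]) (a b : ℝ) :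
    ∫ x in a..b, (f * derivative g).eval x =
      f.eval b * g.eval b - f.eval a * g.eval a - ∫ x in a..b, (derivative f * g).eval x := by
  simp only [eval_mul]
  exact intervalIntegral.integral_mul_deriv_eq_deriv_mul (fun x _ => f.hasDerivAt x)
    (fun x _ => g.hasDerivAt x) ((derivative f).continuous.intervalIntegrable _ _)
    ((derivative g).continuous.intervalIntegrable _ _)

theorem integral_eval_mul_iterate_derivative {f : ℝ[X]} {a b : ℝ} {n : ℕ}
    (ha : ∀ k < n, (derivative^[k] f).eval a = 0) (hb : ∀ k < n, (derivative^[k] f).eval b = 0)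
    (g : ℝ[X]) :
    ∫ x in a..b, (f * derivative^[n] g).eval x =
      (-1) ^ n * ∫ x in a..b, (derivative^[n] f * g).eval x := by
  induction n generalizing g with
  | zero => simp
  | succ n ih =>
    rw [Function.iterate_succ_apply,
      ih (fun k hk => ha k (hk.trans n.lt_succ_self)) (fun k hk => hb k (hk.trans n.lt_succ_self)),
      integral_eval_mul_derivative, ha n n.lt_succ_self, hb n n.lt_succ_self,
      ← Function.iterate_succ_apply' derivative]
    ring

/-- The Legendre polynomial `P_n`, defined by Rodrigues' formula; its derivatives are the
polynomial factors of the associated Legendre functions. -/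
noncomputable def legendrePolynomial (n : ℕ) : ℝ[X] :=
  C (1 / (2 ^ n * n ! : ℝ)) * derivative^[n] ((X ^ 2 - 1) ^ n)

theorem natDegree_X_sq_sub_one_pow_le (n : ℕ) : ((X ^ 2 - 1 : ℝ[X]) ^ n).natDegree ≤ n * 2 :=
  natDegree_pow_le_of_le n (by compute_degree)

theorem natDegree_legendrePolynomial_le (n : ℕ) : (legendrePolynomial n).natDegree ≤ n := by
  refine (natDegree_C_mul_le _ _).trans ((natDegree_iterate_derivative _ n).trans ?_)
  have hbase := natDegree_X_sq_sub_one_pow_le n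
  omega

theorem iterate_derivative_legendrePolynomial (n m : ℕ) :
    derivative^[m] (legendrePolynomial n) =
      C (1 / (2 ^ n * n ! : ℝ)) * derivative^[n + m] ((X ^ 2 - 1) ^ n) := by
  rw [legendrePolynomial, iterate_derivative_C_mul, ← Function.iterate_add_apply, add_comm m n]

theorem eval_iterate_derivative_legendrePolynomial {a : ℝ} (ha : a ^ 2 = 1) (ℓ m : ℕ) :
    (derivative^[m] (legendrePolynomial (ℓ + m))).eval a =
      (ℓ + 2 * m)! / (2 ^ m * m ! * ℓ !) * a ^ ℓ := by
  rw [iterate_derivative_legendrePolynomial, eval_mul, eval_C,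
    eval_iterate_derivative_X_sq_sub_one_pow ha, Nat.add_sub_cancel, ← Nat.choose_symm_add,
    Nat.cast_add_choose, add_assoc, ← two_mul]
  field_simp
  ring

theorem eval_legendrePolynomial {a : ℝ} (ha : a ^ 2 = 1) (n : ℕ) :
    (legendrePolynomial n).eval a = a ^ n := by
  have h := eval_iterate_derivative_legendrePolynomial ha n 0
  simpa [Nat.factorial_ne_zero] using h

theorem integral_eval_mul_legendrePolynomial_eq_zero {f : ℝ[X]} {n : ℕ} (hf : f.natDegree < n) :
    ∫ x in (-1 : ℝ)..1, (f * legendrePolynomial n).eval x = 0 := by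
  have hroot {a : ℝ} (ha : a ^ 2 = 1) (k : ℕ) (hk : k < n) :
      (derivative^[k] ((X ^ 2 - 1 : ℝ[X]) ^ n)).eval a = 0 := by
    have h := eval_iterate_derivative_pow_mul_of_lt (q := (X ^ 2 - 1 : ℝ[X])) (a := a)
      (by simp [ha]) 1 hk
    rwa [mul_one] at h
  have hparts : ∫ x in (-1 : ℝ)..1, (derivative^[n] ((X ^ 2 - 1 : ℝ[X]) ^ n) * f).eval x = 0 := by
    have h := integral_eval_mul_iterate_derivative (hroot (a := -1) (by norm_num))
      (hroot (a := 1) (by norm_num)) f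
    rw [iterate_derivative_eq_zero hf] at h
    simpa using h
  have hscale (x : ℝ) : (f * legendrePolynomial n).eval x = 1 / (2 ^ n * n ! : ℝ) *
      (derivative^[n] ((X ^ 2 - 1 : ℝ[X]) ^ n) * f).eval x := by
    simp only [legendrePolynomial, eval_mul, eval_C]
    ring
  simp only [hscale, intervalIntegral.integral_const_mul, hparts, mul_zero]

theorem integral_eval_one_sub_X_sq_pow_mul_iterate_derivative_legendrePolynomial {r n : ℕ}
    {g : ℝ[X]} (hg : r + g.natDegree < n) :
    ∫ x in (-1 : ℝ)..1,
        ((1 - X ^ 2) ^ r * g * derivative^[r + 1] (legendrePolynomial n)).eval x =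
      r ! * 2 ^ r * (g.eval 1 - (-1) ^ (n + r) * g.eval (-1)) := by
  set f : ℝ[X] := (1 - X ^ 2) ^ r * g with hf
  have hroot {a : ℝ} (ha : a ^ 2 = 1) : (1 - X ^ 2 : ℝ[X]).eval a = 0 := by simp [ha]
  have hvanish {a : ℝ} (ha : a ^ 2 = 1) (k : ℕ) (hk : k < r) : (derivative^[k] f).eval a = 0 :=
    eval_iterate_derivative_pow_mul_of_lt (hroot ha) g hk
  have hvalue {a : ℝ} (ha : a ^ 2 = 1) :
      (derivative^[r] f).eval a = r ! * (-(2 * a)) ^ r * g.eval a := by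
    rw [hf, eval_iterate_derivative_pow_mul (hroot ha)]
    simp [one_add_one_eq_two]
  have hdeg : (derivative^[r + 1] f).natDegree < n := by
    have hpow : ((1 - X ^ 2 : ℝ[X]) ^ r).natDegree ≤ r * 2 :=
      natDegree_pow_le_of_le r (by compute_degree)
    have hmul : f.natDegree ≤ _ := natDegree_mul_le
    have hder := natDegree_iterate_derivative f (r + 1)
    omega
  have hsign : ((-1 : ℝ) ^ r) ^ 2 = 1 := by rw [pow_right_comm, neg_one_sq, one_pow]
  rw [Function.iterate_succ_apply,
    integral_eval_mul_iterate_derivative (hvanish neg_one_sq) (hvanish (one_pow 2)),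
    integral_eval_mul_derivative, ← Function.iterate_succ_apply' derivative,
    integral_eval_mul_legendrePolynomial_eq_zero hdeg, hvalue (one_pow 2), hvalue neg_one_sq,
    eval_legendrePolynomial (one_pow 2), eval_legendrePolynomial neg_one_sq, one_pow, pow_add,
    mul_neg_one, neg_neg, mul_one, mul_one, neg_pow (2 : ℝ)]
  linear_combination r ! * 2 ^ r * g.eval 1 * hsign

theorem integral_eval_iterate_derivative_legendrePolynomial_mul {ℓ n : ℕ} (h : ℓ ≤ n) (r : ℕ) :
    ∫ x in (-1 : ℝ)..1, ((1 - X ^ 2) ^ r *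
        derivative^[r + 1] (legendrePolynomial (ℓ + (r + 1))) *
        derivative^[r + 1] (legendrePolynomial (n + (r + 1)))).eval x =
      (1 + (-1 : ℝ) ^ (ℓ + n)) / (2 * (r + 1 : ℕ)) * ((ℓ + 2 * (r + 1))! / ℓ !) := by
  have hdeg : r + (derivative^[r + 1] (legendrePolynomial (ℓ + (r + 1)))).natDegree <
      n + (r + 1) := by
    have hder := natDegree_iterate_derivative (legendrePolynomial (ℓ + (r + 1))) (r + 1)
    have hleg := natDegree_legendrePolynomial_le (ℓ + (r + 1))
    omega
  have hsign : (-1 : ℝ) ^ (n + (r + 1) + r) * (-1) ^ ℓ = -(-1) ^ (ℓ + n) := by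
    rw [show n + (r + 1) + r = n + 2 * r + 1 by ring, pow_succ, pow_add, pow_mul, neg_one_sq]
    ring
  rw [integral_eval_one_sub_X_sq_pow_mul_iterate_derivative_legendrePolynomial hdeg,
    eval_iterate_derivative_legendrePolynomial (one_pow 2),
    eval_iterate_derivative_legendrePolynomial neg_one_sq, one_pow, mul_left_comm, hsign,
    Nat.factorial_succ r]
  push_cast
  field_simp
  ring

theorem iteratedDeriv_eval {𝕜 : Type*} [NontriviallyNormedField 𝕜] (p : 𝕜[X]) (k : ℕ) :
    iteratedDeriv k (fun x => p.eval x) = fun x => (derivative^[k] p).eval x := by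
  induction k with
  | zero => simp
  | succ k ih =>
    ext x
    rw [iteratedDeriv_succ, ih, Function.iterate_succ_apply', Polynomial.deriv]

theorem assocLegendre_eq_eval_iterate_derivative_legendrePolynomial (n m : ℕ) (x : ℝ) :
    assocLegendre n m x = (-1) ^ m * (1 - x ^ 2) ^ ((m : ℝ) / 2) *
      (derivative^[m] (legendrePolynomial n)).eval x := by
  have hpow : (fun t : ℝ => (t ^ 2 - 1) ^ n) = fun t => ((X ^ 2 - 1 : ℝ[X]) ^ n).eval t := by
    simp
  have hrodrigues : (fun y : ℝ => 1 / (2 ^ n * (n ! : ℝ)) *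
      iteratedDeriv n (fun t : ℝ => (t ^ 2 - 1) ^ n) y) =
      fun y => (legendrePolynomial n).eval y := by
    simp only [hpow, iteratedDeriv_eval, legendrePolynomial, eval_mul, eval_C]
  rw [assocLegendre, hrodrigues, iteratedDeriv_eval]

theorem assocLegendre_mul_assocLegendre (k n m : ℕ) {x : ℝ} (hx : 0 ≤ 1 - x ^ 2) :
    assocLegendre k m x * assocLegendre n m x = (1 - x ^ 2) ^ m *
      (derivative^[m] (legendrePolynomial k) * derivative^[m] (legendrePolynomial n)).eval x := by
  have hweight : ((1 - x ^ 2) ^ ((m : ℝ) / 2)) ^ 2 = (1 - x ^ 2) ^ m := by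
    rw [← Real.rpow_mul_natCast hx, Nat.cast_ofNat, div_mul_cancel₀ _ two_ne_zero,
      Real.rpow_natCast]
  have hsign : ((-1 : ℝ) ^ m) ^ 2 = 1 := by rw [pow_right_comm, neg_one_sq, one_pow]
  rw [assocLegendre_eq_eval_iterate_derivative_legendrePolynomial,
    assocLegendre_eq_eval_iterate_derivative_legendrePolynomial, ← hweight, eval_mul]
  linear_combination ((1 - x ^ 2) ^ ((m : ℝ) / 2)) ^ 2 *
    (derivative^[m] (legendrePolynomial k)).eval x *
    (derivative^[m] (legendrePolynomial n)).eval x * hsign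

theorem integral_assocLegendre_mul_assocLegendre_div {m ℓ n : ℕ} (hm : 1 ≤ m) (h : ℓ ≤ n) :
    ∫ x in (-1 : ℝ)..1, assocLegendre (ℓ + m) m x * assocLegendre (n + m) m x / (1 - x ^ 2) =
      (1 + (-1 : ℝ) ^ (ℓ + n)) / (2 * m) * ((ℓ + 2 * m)! / ℓ !) := by
  obtain ⟨r, rfl⟩ := Nat.exists_eq_add_of_le' hm
  rw [← integral_eval_iterate_derivative_legendrePolynomial_mul h r]
  refine intervalIntegral.integral_congr_Ioo_of_le (by norm_num) fun x hx => ?_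
  have hpos : 0 < 1 - x ^ 2 := by nlinarith [hx.1, hx.2]
  simp only [assocLegendre_mul_assocLegendre _ _ _ hpos.le, eval_mul, eval_pow, eval_sub, eval_one,
    eval_X]
  field_simp
  ring

end LegendrePolynomials

/-- The normalization constant of `tildeP (ℓ + m) m`, indexed by the matrix index `ℓ` rather than
by the degree `ℓ + m`. -/
noncomputable def tildePNormalization (m ℓ : ℕ) : ℝ :=
  √((ℓ + m + 1 / 2) * ℓ ! / (ℓ + 2 * m)!)

theorem tildeP_mul_tildeP (m ℓ n : ℕ) (x : ℝ) :
    tildeP (ℓ + m) m x * tildeP (n + m) m x =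
      tildePNormalization m ℓ * tildePNormalization m n *
        (assocLegendre (ℓ + m) m x * assocLegendre (n + m) m x) := by
  have hsign : ((-1 : ℝ) ^ m) ^ 2 = 1 := by rw [pow_right_comm, neg_one_sq, one_pow]
  have htilde (k : ℕ) : tildeP (k + m) m x =
      (-1) ^ m * tildePNormalization m k * assocLegendre (k + m) m x := by
    rw [tildeP, tildePNormalization, Nat.add_sub_cancel, add_assoc k m m, ← two_mul, Nat.cast_add]
  rw [htilde, htilde]
  linear_combination tildePNormalization m ℓ * tildePNormalization m n *
    (assocLegendre (ℓ + m) m x * assocLegendre (n + m) m x) * hsign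

theorem two_mul_tildePNormalization_mul (m ℓ n : ℕ) :
    2 * (tildePNormalization m ℓ * tildePNormalization m n * ((ℓ + 2 * m)! / ℓ !)) =
      √((2 * ℓ + 2 * m + 1) * (2 * n + 2 * m + 1)) *
        √(((ℓ + 2 * m)! / ℓ !) * (n ! / (n + 2 * m)!)) := by
  have hsq : (2 * ((ℓ + 2 * m)! / ℓ !) : ℝ) = √((2 * ((ℓ + 2 * m)! / ℓ !)) ^ 2) :=
    (Real.sqrt_sq (by positivity)).symm
  rw [mul_left_comm, hsq, tildePNormalization, tildePNormalization,
    ← Real.sqrt_mul (by positivity), ← Real.sqrt_mul (by positivity),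
    ← Real.sqrt_mul (by positivity)]
  congr 1
  field_simp

theorem Minv_of_le {ℓ n : ℕ} (h : ℓ ≤ n) (m : ℕ) :
    Minv m ℓ n = tildePNormalization m ℓ * tildePNormalization m n *
      ((1 + (-1) ^ (ℓ + n)) / (2 * m) * ((ℓ + 2 * m)! / ℓ !)) := by
  rw [Minv, if_pos h]
  split_ifs with hpar
  · rw [hpar.neg_one_pow, div_mul_eq_mul_div, ← two_mul_tildePNormalization_mul]
    ring
  · rw [(Nat.not_even_iff_odd.mp hpar).neg_one_pow]
    ring

theorem Minv_comm (m ℓ n : ℕ) : Minv m ℓ n = Minv m n ℓ := by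
  unfold Minv
  rw [add_comm n ℓ]
  split_ifs with _ hle hge hge
  · rw [le_antisymm hle hge]
  · rw [mul_comm (2 * (ℓ : ℝ) + _ + _), mul_comm ((_ : ℝ) / _) ((n ! : ℝ) / _)]
  · rw [mul_comm (2 * (ℓ : ℝ) + _ + _), mul_comm ((_ : ℝ) / _) ((_ : ℝ) / (n ! : ℝ))]
  · omega
  · rfl

/-- the semiseparable matrix `M⁻¹` has entries given by the integrals
`∫ P̃_{ℓ+m}^m P̃_{n+m}^m / (1-x²) dx`. -/
theorem Minv_entries_eq_integral (m : ℕ) (hm : 1 ≤ m) (ℓ n : ℕ) :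
    Minv m ℓ n =
      ∫ x in (-1 : ℝ)..1, tildeP (ℓ + m) m x * tildeP (n + m) m x / (1 - x ^ 2) := by
  wlog h : ℓ ≤ n generalizing ℓ n
  · rw [Minv_comm, this n ℓ (le_of_not_ge h)]
    simp only [mul_comm]
  have hfactor (x : ℝ) : tildeP (ℓ + m) m x * tildeP (n + m) m x / (1 - x ^ 2) =
      tildePNormalization m ℓ * tildePNormalization m n *
        (assocLegendre (ℓ + m) m x * assocLegendre (n + m) m x / (1 - x ^ 2)) := by
    rw [tildeP_mul_tildeP, mul_div_assoc]
  simp only [hfactor, intervalIntegral.integral_const_mul]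
  rw [integral_assocLegendre_mul_assocLegendre_div hm h, Minv_of_le h]
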